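/- Let μ be any σ-invariant Borel probability measure on X. For every N ≥ 2, μ(σ^{h N}(C N) Δ C N) < (1 / b^{N−1}) · μ(C N), where C N = { x ∈ X : the block x_0 x_1 … x_{h N − 1} equals B N } and Δ denotes symmetric difference. -/

import Mathlib

open MeasureTheory Filter Topology
open scoped ENNReal

/-- `m`-fold concatenation of a word. -/
def wordPow (w : List ℕ) (m : ℕ) : List ℕ := (List.replicate m w).flatten

/-- The words of the generalized del Junco–Rudolph construction:
`B 0 = [0]`, `B (k+1) = (B k)^(a·b^k) ++ [1] ++ (B k)^((b-a)·b^k)`. -/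
def Bword (b a : ℕ) : ℕ → List ℕ
  | 0 => [0]
  | k + 1 => wordPow (Bword b a k) (a * b ^ k) ++ [1] ++ wordPow (Bword b a k) ((b - a) * b ^ k)

/-- The height sequence: `h 0 = 1`, `h (k+1) = b^(k+1) * h k + 1`. -/
def hseq (b : ℕ) : ℕ → ℕ
  | 0 => 1
  | k + 1 => b ^ (k + 1) * hseq b k + 1

/-- The word `w` occurs in the word `v` at position `p` (0-based). -/
def OccursAt (w v : List ℕ) (p : ℕ) : Prop :=
  p + w.length ≤ v.length ∧ (v.drop p).take w.length = w

/-- The block of `x` of length `w.length` starting at index `m` equals the word `w`. -/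
def BlockEq (x : ℤ → ℕ) (m : ℤ) (w : List ℕ) : Prop :=
  ∀ i : ℕ, i < w.length → x (m + i) = w.getD i 0

/-- Membership in the subshift `X`: every finite block of `x` occurs as a consecutive
subword of some `B k`. -/
def InX (b a : ℕ) (x : ℤ → ℕ) : Prop :=
  ∀ (m : ℤ) (l : ℕ), ∃ k p, OccursAt (List.ofFn fun i : Fin l => x (m + (i : ℕ))) (Bword b a k) p

/-- The left shift `(σ x) n = x (n+1)` on `{0,1}^ℤ`. -/
def shiftMap (x : ℤ → ℕ) : ℤ → ℕ := fun n => x (n + 1)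

/-- The cylinder set `C N ⊆ X` of points whose block `x_0 … x_{h N - 1}` equals `B N`. -/
def Cset (b a N : ℕ) : Set (ℤ → ℕ) :=
  {x | InX b a x ∧ BlockEq x 0 (Bword b a N)}

structure Good (b a : ℕ) : Prop where
  hb : 2 ≤ b
  ha : 1 ≤ a
  hab : a + 1 ≤ b

/-- offset of the `i`-th `B n` in `B (n+1)` -/
def posn (b a n i : ℕ) : ℕ := i * hseq b n + if a * b ^ n ≤ i then 1 else 0

/-- offset of the middle `1` in `B (n+1)` -/
def off (b a n : ℕ) : ℕ := a * b ^ n * hseq b n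

def ee (b a : ℕ) : ℕ → ℕ → ℕ
  | n, i => if _h : 2 ≤ b ∧ 0 < i then
      ee b a (n + 1) (i / b ^ (n + 1)) + posn b a n (i % b ^ (n + 1)) else 0
termination_by _ i => i
decreasing_by
  exact Nat.div_lt_self _h.2 (Nat.one_lt_pow (by omega) (by omega))

/-- numeric data at level n -/
theorem Good.num {b a : ℕ} (g : Good b a) (n : ℕ) :
    ∃ A A' : ℕ, a * b ^ n = A ∧ (b - a) * b ^ n = A' ∧ b ^ (n + 1) = A + A' ∧ b ^ n ≤ A ∧ b ^ n ≤ A'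
      ∧ 1 ≤ b ^ n := by
  refine ⟨_, _, rfl, rfl, ?_, ?_, ?_, ?_⟩
  · rw [← add_mul, pow_succ]
    have := g.hab
    rw [show a + (b - a) = b by omega, mul_comm]
  · exact Nat.le_mul_of_pos_left _ g.ha
  · exact Nat.le_mul_of_pos_left _ (by have := g.hab; omega)
  · exact Nat.one_le_pow _ _ (by have := g.hb; omega)

theorem hseq_pos (b n : ℕ) : 1 ≤ hseq b n := by
  cases n <;> simp [hseq]

theorem ee_zero (b a n : ℕ) : ee b a n 0 = 0 := by
  rw [ee]; simp

theorem ee_rec {b a : ℕ} (g : Good b a) (n q r : ℕ) (hr : r < b ^ (n + 1)) :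
    ee b a n (b ^ (n + 1) * q + r) = ee b a (n + 1) q + posn b a n r := by
  have hp : 0 < b ^ (n + 1) := by omega
  by_cases h : 0 < b ^ (n + 1) * q + r
  · rw [ee, dif_pos ⟨g.hb, h⟩]
    congr 2
    · rw [Nat.mul_add_div hp, Nat.div_eq_of_lt hr, add_zero]
    · rw [Nat.mul_add_mod, Nat.mod_eq_of_lt hr]
  · have h0 : b ^ (n + 1) * q + r = 0 := by omega
    have hq : q = 0 := by
      rcases Nat.eq_zero_or_pos q with h1 | h1
      · exact h1
      · have := Nat.mul_pos hp h1; omega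
    have hr0 : r = 0 := by omega
    subst hq; subst hr0
    obtain ⟨A, A', h1, h2, h3, h4, h5, h6⟩ := g.num n
    simp only [mul_zero, add_zero, ee_zero, posn, h1]
    rw [if_neg (by omega)]; simp

/-- combined step lemma -/
theorem ee_step {b a : ℕ} (g : Good b a) (n j : ℕ) :
    ee b a n (j + 1) = ee b a n j + hseq b n ∨ 
    (ee b a n (j + 1) = ee b a n j + hseq b n + 1 ∧ b ^ n ∣ j + 1 ∧
      ((∃ q, ee b a n j + hseq b n = ee b a (n + 1) q + off b a n) ∨
       (∃ q, ee b a n j + hseq b n = ee b a (n + 1) q + hseq b (n + 1) ∧ 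
          ee b a (n + 1) (q + 1) = ee b a (n + 1) q + hseq b (n + 1) + 1))) := by
  induction j using Nat.strong_induction_on generalizing n with
  | _ j ih =>
  obtain ⟨A, A', h1, h2, h3, h4, h5, h6⟩ := g.num n
  have hp : 0 < b ^ (n + 1) := by omega
  obtain ⟨q, r, hr, hj⟩ : ∃ q r, r < b ^ (n + 1) ∧ j = b ^ (n + 1) * q + r :=
    ⟨j / b ^ (n + 1), j % b ^ (n + 1), Nat.mod_lt _ hp, (Nat.div_add_mod _ _).symm⟩
  have e1 := ee_rec g n q r hr
  rw [← hj] at e1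
  by_cases hr1 : r + 1 < b ^ (n + 1)
  · have e2 := ee_rec g n q (r + 1) hr1
    rw [← add_assoc, ← hj] at e2
    rw [e1, e2]
    simp only [posn, h1, off, add_mul, one_mul]
    by_cases c1 : A ≤ r
    · left; rw [if_pos c1, if_pos (by omega)]; omega
    · by_cases c2 : A ≤ r + 1
      · right
        have : A = r + 1 := by omega
        subst this
        refine ⟨by rw [if_pos c2, if_neg c1]; omega, ?_, Or.inl ⟨q, ?_⟩⟩
        · rw [hj, add_assoc]
          refine dvd_add ?_ ?_
          · exact Dvd.dvd.mul_right (pow_dvd_pow _ (by omega)) _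
          · rw [← h1]; exact Dvd.intro_left _ rfl
        · rw [if_neg c1, add_mul]; omega
      · left; rw [if_neg c1, if_neg c2]; omega
  · have hr2 : r + 1 = b ^ (n + 1) := by omega
    have hqj : q < j := by
      have : 1 * q ≤ b ^ (n + 1) * q := Nat.mul_le_mul_right _ hp
      omega
    have e2 := ee_rec g n (q + 1) 0 hp
    have hj1 : b ^ (n + 1) * (q + 1) + 0 = j + 1 := by rw [hj, mul_add]; omega
    rw [hj1] at e2
    have hd : b ^ n ∣ j + 1 := by
      rw [← hj1]; exact Dvd.dvd.mul_right (pow_dvd_pow _ (by omega)) _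
    have hs : hseq b (n + 1) = r * hseq b n + hseq b n + 1 := by
      rw [hseq, ← hr2]; ring
    simp only [posn, h1] at e1 e2
    rw [if_pos (by omega)] at e1
    rw [if_neg (by omega)] at e2
    rcases ih q hqj (n + 1) with h | ⟨h, -⟩
    · left; omega
    · right
      refine ⟨by omega, hd, Or.inr ⟨q, by omega, h⟩⟩

theorem ee_lt {b a : ℕ} (g : Good b a) (n j : ℕ) : ee b a n j + hseq b n ≤ ee b a n (j + 1) := by
  rcases ee_step g n j with h | ⟨h, -⟩ <;> omega

theorem ee_mono {b a : ℕ} (g : Good b a) (n : ℕ) : StrictMono (ee b a n) :=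
  strictMono_nat_of_lt_succ fun j => by
    have := ee_lt g n j; have := hseq_pos b n; omega

theorem ee_sep {b a : ℕ} (g : Good b a) (n i j : ℕ) (h : ee b a n i < ee b a n j) :
    ee b a n i + hseq b n ≤ ee b a n j :=
  (ee_lt g n i).trans ((ee_mono g n).monotone ((ee_mono g n).lt_iff_lt.1 h))

/-- position predicates over ℤ -/
def EZ (b a n : ℕ) (p : ℤ) : Prop := ∃ j : ℕ, p = (ee b a n j : ℤ)

def SZ (b a n : ℕ) (s : ℤ) : Prop :=
  ∃ j : ℕ, s = (ee b a n j : ℤ) + hseq b n ∧ (ee b a n (j + 1) : ℤ) = s + 1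

theorem EZ.sep {b a : ℕ} (g : Good b a) {n : ℕ} {p q : ℤ} (hp : EZ b a n p) (hq : EZ b a n q)
    (h : p < q) : p + hseq b n ≤ q := by
  obtain ⟨i, rfl⟩ := hp
  obtain ⟨j, rfl⟩ := hq
  have := ee_sep g n i j (by exact_mod_cast h)
  exact_mod_cast this

theorem EZ.not_SZ {b a : ℕ} (g : Good b a) {n : ℕ} {p s : ℤ} (hp : EZ b a n p) (hs : SZ b a n s) 
    (h1 : p ≤ s) (h2 : s < p + hseq b n) : False := by
  obtain ⟨i, h3, h4⟩ := hs
  obtain ⟨j, rfl⟩ := hp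
  have hl : i < j := (ee_mono g n).lt_iff_lt.1 (by omega)
  have hr : j < i + 1 := (ee_mono g n).lt_iff_lt.1 (by omega)
  omega

theorem SZ.next {b a : ℕ} {n : ℕ} {s : ℤ} (hs : SZ b a n s) : EZ b a n (s + 1) := by
  obtain ⟨i, h3, h4⟩ := hs
  exact ⟨_, h4.symm⟩

theorem SZ.prev {b a : ℕ} {n : ℕ} {s : ℤ} (hs : SZ b a n s) : EZ b a n (s - hseq b n) := by
  obtain ⟨i, h3, h4⟩ := hs
  exact ⟨i, by omega⟩

theorem hseq_succ' {b a : ℕ} (_g : Good b a) (n : ℕ) {A A' : ℕ} (h3 : b ^ (n + 1) = A + A') :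
    hseq b (n + 1) = A * hseq b n + A' * hseq b n + 1 := by
  rw [hseq, h3, add_mul]

theorem SZ.dvd {b a : ℕ} (g : Good b a) {n j : ℕ} 
    (hs : ee b a n (j + 1) = ee b a n j + hseq b n + 1) : b ^ n ∣ j + 1 := by
  rcases ee_step g n j with h | ⟨h, h1, -⟩
  · omega
  · exact h1

theorem SZ.cases {b a : ℕ} (g : Good b a) {n : ℕ} {s : ℤ} (hs : SZ b a n s) :
    SZ b a (n + 1) s ∨ EZ b a (n + 1) (s - off b a n) := by
  obtain ⟨j, h1, h2⟩ := hs
  rcases ee_step g n j with h | ⟨h, -, ⟨q, hq⟩ | ⟨q, hq, hq'⟩⟩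
  · omega
  · right; exact ⟨q, by omega⟩
  · left; exact ⟨q, by omega, by omega⟩

theorem EZ.sub {b a : ℕ} (g : Good b a) {n : ℕ} {p : ℤ} (hp : EZ b a (n + 1) p) (i : ℕ)
    (hi : i < b ^ (n + 1)) : EZ b a n (p + posn b a n i) := by
  obtain ⟨j, rfl⟩ := hp
  exact ⟨_, by rw [ee_rec g n j i hi]; push_cast; rfl⟩

theorem EZ.mid {b a : ℕ} (g : Good b a) {n : ℕ} {p : ℤ} (hp : EZ b a (n + 1) p) :
    SZ b a n (p + off b a n) := by
  obtain ⟨j, rfl⟩ := hp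
  obtain ⟨A, A', h1, h2, h3, h4, h5, h6⟩ := g.num n
  refine ⟨b ^ (n + 1) * j + (A - 1), ?_, ?_⟩
  · rw [ee_rec g n j (A - 1) (by omega)]
    simp only [posn, off, h1]
    rw [if_neg (by omega)]
    obtain ⟨c, rfl⟩ : ∃ c, A = c + 1 := ⟨A - 1, by omega⟩
    push_cast; simp; ring
  · rw [add_assoc, show A - 1 + 1 = A by omega, ee_rec g n j A (by omega)]
    simp only [posn, off, h1]
    simp; ring

theorem SZ.down {b a : ℕ} (g : Good b a) {n : ℕ} {s : ℤ} (hs : SZ b a (n + 1) s) :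
    SZ b a n s := by
  obtain ⟨j, hj1, hj2⟩ := hs
  obtain ⟨A, A', h1, h2, h3, h4, h5, h6⟩ := g.num n
  have hh := hseq_succ' g n h3
  refine ⟨b ^ (n + 1) * j + (A + A' - 1), ?_, ?_⟩
  · rw [ee_rec g n j _ (by omega)]
    simp only [posn, h1]
    rw [if_pos (by omega)]
    obtain ⟨c, rfl⟩ : ∃ c, A' = c + 1 := ⟨A' - 1, by omega⟩
    rw [hj1, hh]
    push_cast; simp; ring
  · rw [add_assoc, show A + A' - 1 + 1 = b ^ (n + 1) by omega,
      show b ^ (n + 1) * j + b ^ (n + 1) = b ^ (n + 1) * (j + 1) + 0 by ring,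
      ee_rec g n _ 0 (by omega)]
    simp only [posn, h1]
    rw [if_neg (by omega), ← hj2]; simp

theorem SZ.down0 {b a : ℕ} (g : Good b a) {n : ℕ} {s : ℤ} (hs : SZ b a n s) :
    SZ b a 0 s := by
  induction n with
  | zero => exact hs
  | succ n ih => exact ih (hs.down g)

/-- run of blocks after a spacer -/
theorem SZ.run {b a : ℕ} (g : Good b a) {n : ℕ} {s : ℤ} (hs : SZ b a n s) (i : ℕ)
    (hi : i < b ^ n) : EZ b a n (s + 1 + i * hseq b n) := by
  obtain ⟨j, hj1, hj2⟩ := hs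
  have hd : b ^ n ∣ j + 1 := SZ.dvd g (by omega)
  refine ⟨j + 1 + i, ?_⟩
  induction i with
  | zero => simp [hj2]
  | succ i ih =>
    have := ih (by omega)
    rcases ee_step g n (j + 1 + i) with h | ⟨h, h1, -⟩
    · rw [← add_assoc, h]; push_cast; rw [← this]; ring
    · exfalso
      rw [add_assoc, Nat.dvd_add_right hd] at h1
      have := Nat.le_of_dvd (by omega) h1
      omega

theorem Good.two_le_pow {b a : ℕ} (g : Good b a) (n : ℕ) : 2 ≤ b ^ (n + 1) := by
  have h1 := g.hb
  have : b ^ 1 ≤ b ^ (n + 1) := Nat.pow_le_pow_right (by omega) (by omega)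
  rw [pow_one] at this
  omega

theorem SZ.sep {b a : ℕ} (g : Good b a) {n : ℕ} {s s' : ℤ} (hs : SZ b a n s) (hs' : SZ b a n s')
    (h : s < s') : s + 1 + b ^ n * hseq b n ≤ s' := by
  obtain ⟨A, A', h1, h2, h3, h4, h5, h6⟩ := g.num n
  have e1 := hs.run g (b ^ n - 1) (by omega)
  by_contra hlt
  -- s' lies in one of the blocks
  have key : ∀ i : ℕ, i ≤ b ^ n → s + 1 + i * hseq b n ≤ s' := by
    intro i
    induction i with
    | zero => intro _; push_cast; omega
    | succ i ih =>
      intro hi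
      have h7 := ih (by omega)
      have h8 := hs.run g i (by omega)
      by_contra h9
      refine h8.not_SZ g hs' h7 ?_
      push_cast at h9
      linarith
  have := key _ le_rfl
  push_cast at this
  exact hlt this

/-- the limit word, extended to ℤ by `2` -/
noncomputable def yy (b a : ℕ) (z : ℤ) : ℕ :=
  open Classical in if z < 0 then 2 else if EZ b a 0 z then 0 else 1

theorem Bword_length {b a : ℕ} (g : Good b a) (n : ℕ) : (Bword b a n).length = hseq b n := by
  induction n with
  | zero => rfl
  | succ n ih =>
    obtain ⟨A, A', h1, h2, h3, h4, h5, h6⟩ := g.num n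
    simp [Bword, wordPow, ih, h1, h2, hseq_succ' g n h3]
    ring

theorem BlockEq_append (x : ℤ → ℕ) (m : ℤ) (u v : List ℕ) :
    BlockEq x m (u ++ v) ↔ BlockEq x m u ∧ BlockEq x (m + u.length) v := by
  constructor
  · intro h
    refine ⟨fun i hi => ?_, fun i hi => ?_⟩
    · rw [h i (by simp; omega), List.getD_append _ _ _ _ hi]
    · have := h (u.length + i) (by simp; omega)
      rw [List.getD_append_right _ _ _ _ (by omega)] at this
      simpa [add_assoc] using this
  · rintro ⟨h1, h2⟩ i hi
    simp only [List.length_append] at hi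
    by_cases h : i < u.length
    · rw [h1 i h, List.getD_append _ _ _ _ h]
    · rw [List.getD_append_right _ _ _ _ (by omega), ← h2 (i - u.length) (by omega)]
      congr 1; omega

theorem BlockEq_pow (x : ℤ → ℕ) (m : ℤ) (w : List ℕ) (k : ℕ) :
    BlockEq x m (wordPow w k) ↔ ∀ i : ℕ, i < k → BlockEq x (m + i * w.length) w := by
  induction k generalizing m with
  | zero => simp [wordPow, BlockEq]
  | succ k ih =>
    have : wordPow w (k + 1) = w ++ wordPow w k := by simp [wordPow, List.replicate_succ]
    rw [this, BlockEq_append, ih]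
    constructor
    · rintro ⟨h1, h2⟩ i hi
      rcases i with _ | i
      · simpa using h1
      · have := h2 i (by omega)
        convert this using 1
        push_cast; ring
    · intro h
      refine ⟨by simpa using h 0 (by omega), fun i hi => ?_⟩
      have := h (i + 1) (by omega)
      convert this using 1
      push_cast; ring

theorem BlockEq_succ {b a : ℕ} (g : Good b a) (x : ℤ → ℕ) (m : ℤ) (n : ℕ) :
    BlockEq x m (Bword b a (n + 1)) ↔
      (∀ i : ℕ, i < a * b ^ n → BlockEq x (m + i * hseq b n) (Bword b a n)) ∧
      x (m + off b a n) = 1 ∧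
      (∀ i : ℕ, i < (b - a) * b ^ n → BlockEq x (m + off b a n + 1 + i * hseq b n) (Bword b a n)) := by
  have hl : (wordPow (Bword b a n) (a * b ^ n)).length = off b a n := by
    simp [wordPow, off, Bword_length g]
  rw [Bword, BlockEq_append, BlockEq_append, BlockEq_pow, BlockEq_pow, and_assoc]
  simp only [List.length_append, hl, Bword_length g]
  simp [BlockEq, add_assoc]

/-- pattern `B n, 1, B n` centered at `s` -/
def Pat (b a : ℕ) (x : ℤ → ℕ) (n : ℕ) (s : ℤ) : Prop :=
  BlockEq x (s - hseq b n) (Bword b a n) ∧ x s = 1 ∧ BlockEq x (s + 1) (Bword b a n)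

theorem Pat_of_block {b a : ℕ} (g : Good b a) {x : ℤ → ℕ} {m : ℤ} {n : ℕ}
    (h : BlockEq x m (Bword b a (n + 1))) : Pat b a x n (m + off b a n) := by
  obtain ⟨A, A', h1, h2, h3, h4, h5, h6⟩ := g.num n
  rw [BlockEq_succ g] at h
  obtain ⟨k1, k2, k3⟩ := h
  refine ⟨?_, k2, ?_⟩
  · have := k1 (A - 1) (by omega)
    convert this using 1
    rw [off, h1, Nat.cast_sub (by omega)]; push_cast; ring
  · simpa using k3 0 (by omega)

theorem block_sub {b a : ℕ} (g : Good b a) {x : ℤ → ℕ} {m : ℤ} {n : ℕ}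
    (h : BlockEq x m (Bword b a (n + 1))) (i : ℕ) (hi : i < b ^ (n + 1)) :
    BlockEq x (m + posn b a n i) (Bword b a n) := by
  obtain ⟨A, A', h1, h2, h3, h4, h5, h6⟩ := g.num n
  rw [BlockEq_succ g] at h
  obtain ⟨k1, k2, k3⟩ := h
  by_cases hA : A ≤ i
  · have := k3 (i - A) (by omega)
    convert this using 1
    simp only [posn, off, h1, if_pos hA]
    rw [Nat.cast_sub hA]; push_cast; ring
  · have := k1 i (by omega)
    simp only [posn, h1, if_neg hA]
    simpa using this

theorem Pat.down {b a : ℕ} (g : Good b a) {x : ℤ → ℕ} {s : ℤ} {n : ℕ} 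
    (h : Pat b a x (n + 1) s) : Pat b a x n s := by
  obtain ⟨A, A', h1, h2, h3, h4, h5, h6⟩ := g.num n
  obtain ⟨k1, k2, k3⟩ := h
  refine ⟨?_, k2, ?_⟩
  · have := block_sub g k1 (b ^ (n + 1) - 1) (by omega)
    convert this using 1
    simp only [posn, h1]
    rw [if_pos (by omega), hseq_succ' g n h3, h3]
    push_cast [Nat.cast_sub (show 1 ≤ A + A' by omega)]; ring
  · have := block_sub g k3 0 (by omega)
    simp only [posn, h1] at this
    rw [if_neg (by omega)] at this
    simpa using this

theorem yy_EZ {b a : ℕ} (g : Good b a) {n : ℕ} {p : ℤ} (hp : EZ b a n p) :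
    BlockEq (yy b a) p (Bword b a n) := by
  induction n generalizing p with
  | zero =>
    intro i hi
    simp only [Bword, List.length_singleton] at hi
    obtain rfl : i = 0 := by omega
    have hp' := hp
    obtain ⟨j, hj⟩ := hp
    rw [show p + ((0 : ℕ) : ℤ) = p by simp, yy, if_neg (by omega), if_pos hp']; rfl
  | succ n ih =>
    obtain ⟨A, A', h1, h2, h3, h4, h5, h6⟩ := g.num n
    rw [BlockEq_succ g]
    refine ⟨fun i hi => ?_, ?_, fun i hi => ?_⟩
    · have := ih (hp.sub g i (by omega))
      simp only [posn] at this
      rw [if_neg (by omega)] at this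
      simpa using this
    · have hm := (hp.mid g).down0 g
      have hn : ¬ EZ b a 0 (p + off b a n) := fun h => h.not_SZ g hm le_rfl (by simp [hseq])
      obtain ⟨j, hj⟩ := hp
      rw [yy, if_neg (by omega), if_neg hn]
    · have := ih (hp.sub g (A + i) (by omega))
      simp only [posn, h1] at this
      rw [if_pos (by omega)] at this
      convert this using 1
      rw [off, h1]; push_cast; ring

theorem yy_SZ {b a : ℕ} (g : Good b a) {n : ℕ} {s : ℤ} (hs : SZ b a n s) :
    Pat b a (yy b a) n s := by
  refine ⟨yy_EZ g hs.prev, ?_, yy_EZ g hs.next⟩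
  have hm := hs.down0 g
  have hn : ¬ EZ b a 0 s := fun h => h.not_SZ g hm le_rfl (by simp [hseq])
  obtain ⟨j, hj, -⟩ := hs
  rw [yy, if_neg (by omega), if_neg hn]

theorem Pat_SZ {b a : ℕ} (g : Good b a) {n : ℕ} {s : ℤ} (hs : Pat b a (yy b a) n s) :
    SZ b a n s := by
  induction n generalizing s with
  | zero =>
    obtain ⟨k1, k2, k3⟩ := hs
    have q1 := k1 0 (by simp [Bword])
    have q2 : EZ b a 0 (s - 1) := by
      by_contra hc
      rw [show s - ((hseq b 0 : ℕ) : ℤ) + ((0 : ℕ) : ℤ) = s - 1 by simp [hseq], yy,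
        if_neg hc] at q1
      simp only [Bword, List.getD_cons_zero] at q1
      split_ifs at q1
    have q3 : ¬ EZ b a 0 s := by
      intro hc
      simp only [yy, hc, if_true] at k2
      split_ifs at k2
      omega
    obtain ⟨j, hj⟩ := q2
    refine ⟨j, by simp [hseq]; omega, ?_⟩
    rcases ee_step g 0 j with h | ⟨h, -⟩
    · exfalso; apply q3; refine ⟨j + 1, ?_⟩; rw [h]; simp [hseq]; omega
    · rw [h]; simp [hseq]; omega
  | succ n ih =>
    obtain ⟨A, A', h1, h2, h3, h4, h5, h6⟩ := g.num n
    have s0 := ih (hs.down g)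
    rcases s0.cases g with h | hq
    · exact h
    exfalso
    obtain ⟨k1, k2, k3⟩ := hs
    have s1 := ih (Pat_of_block g k1)
    have s2 := ih (Pat_of_block g k3)
    have hh := hseq_succ' g n h3
    have ho : off b a n = A * hseq b n := by rw [off, h1]
    have hpos := hseq_pos b n
    have p1 : 1 ≤ A * hseq b n := Nat.mul_pos (by omega) hpos
    have p2 : 1 ≤ A' * hseq b n := Nat.mul_pos (by omega) hpos
    generalize A * hseq b n = o at *
    generalize A' * hseq b n = o' at *
    have t2 : SZ b a (n + 1) (s + 1 + off b a n) := by
      rcases s2.cases g with h | h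
      · exact h
      · exfalso
        have := hq.sep g h (by omega)
        omega
    have t1 : SZ b a (n + 1) (s - hseq b (n + 1) + off b a n) := by
      rcases s1.cases g with h | h
      · exact h
      · exfalso
        have := h.sep g hq (by omega)
        omega
    have c1 : o' ≤ o := by
      by_contra hc
      exact hq.not_SZ g t2 (by omega) (by omega)
    have c2 : o ≤ o' := by
      by_contra hc
      exact hq.not_SZ g t1 (by omega) (by omega)
    have := t1.sep g t2 (by omega)
    have h8 := g.two_le_pow n
    have h9 : 2 * hseq b (n + 1) ≤ b ^ (n + 1) * hseq b (n + 1) := Nat.mul_le_mul_right _ h8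
    zify at h9
    omega
theorem transfer {b a : ℕ} (g : Good b a) {x : ℤ → ℕ} (hx : InX b a x) (W : ℕ) :
    ∃ P : ℤ, (W : ℤ) ≤ P ∧ ∀ z : ℤ, -(W : ℤ) ≤ z → z ≤ W → x z = yy b a (P + z) := by
  obtain ⟨k, p, h1, h2⟩ := hx (-(W : ℤ)) (2 * W + 1)
  refine ⟨p + W, by omega, fun z hz1 hz2 => ?_⟩
  have hE : EZ b a k 0 := ⟨0, by simp [ee_zero]⟩
  have hB := yy_EZ g hE
  simp only [List.length_ofFn] at h1 h2
  obtain ⟨i, hi⟩ : ∃ i : ℕ, z + W = i := ⟨(z + W).toNat, by omega⟩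
  have hi' : i < 2 * W + 1 := by omega
  have h3 := hB (p + i) (by omega)
  have h4 : (List.ofFn fun i : Fin (2 * W + 1) => x (-(W : ℤ) + (i : ℕ))).getD i 0 = x z := by
    rw [List.getD_eq_getElem _ _ (by simpa using hi')]
    simp only [List.getElem_ofFn]
    congr 1; omega
  rw [← h4, ← h2, show (p : ℤ) + W + z = 0 + ((p + i : ℕ) : ℤ) by push_cast; omega, h3]
  simp [List.getD, hi', List.getElem?_drop]

theorem tr_block {b a : ℕ} (g : Good b a) {x : ℤ → ℕ} {W : ℕ} {P : ℤ}
    (h : ∀ z : ℤ, -(W : ℤ) ≤ z → z ≤ W → x z = yy b a (P + z)) (n : ℕ) (m : ℤ)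
    (h1 : -(W : ℤ) ≤ m) (h2 : m + hseq b n ≤ W) :
    BlockEq x m (Bword b a n) ↔ BlockEq (yy b a) (P + m) (Bword b a n) := by
  unfold BlockEq
  rw [Bword_length g]
  refine forall_congr' fun i => forall_congr' fun hi => ?_
  rw [h (m + i) (by omega) (by omega), add_assoc]

theorem tr_pat {b a : ℕ} (g : Good b a) {x : ℤ → ℕ} {W : ℕ} {P : ℤ}
    (h : ∀ z : ℤ, -(W : ℤ) ≤ z → z ≤ W → x z = yy b a (P + z)) (n : ℕ) (s : ℤ)
    (h1 : -(W : ℤ) ≤ s - hseq b n) (h2 : s + 1 + hseq b n ≤ W) :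
    Pat b a x n s ↔ SZ b a n (P + s) := by
  have : Pat b a x n s ↔ Pat b a (yy b a) n (P + s) := by
    unfold Pat
    rw [tr_block g h n _ h1 (by omega), tr_block g h n _ (by omega) h2, h s (by omega) (by omega),
      add_sub_assoc, add_assoc]
  rw [this]
  exact ⟨Pat_SZ g, yy_SZ g⟩

theorem X1 {b a : ℕ} (g : Good b a) {x : ℤ → ℕ} (hx : InX b a x) (n : ℕ)
    (h : BlockEq x 0 (Bword b a (n + 1))) :
    BlockEq x (-(hseq b (n + 1) : ℤ)) (Bword b a (n + 1)) ∨ Pat b a x (n + 1) (-1) ∨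
      Pat b a x (n + 1) (off b a n) := by
  obtain ⟨P, hP, tr⟩ := transfer g hx (3 * hseq b (n + 1) + off b a n + 3)
  have hh : hseq b n ≤ hseq b (n + 1) := by
    rw [hseq]
    have := Nat.mul_le_mul_right (hseq b n) (g.two_le_pow n)
    omega
  rw [tr_pat g tr _ _ (by omega) (by omega), tr_pat g tr _ _ (by omega) (by omega),
    tr_block g tr _ _ (by omega) (by omega)]
  have h1 := Pat_of_block g h
  rw [tr_pat g tr _ _ (by omega) (by omega)] at h1
  rcases h1.cases g with h2 | ⟨j, hj⟩
  · right; right; simpa using h2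
  · rcases j with _ | j
    · rw [ee_zero] at hj; omega
    · rcases ee_step g (n + 1) j with h3 | ⟨h3, -⟩
      · left; apply yy_EZ g; exact ⟨j, by omega⟩
      · right; left; exact ⟨j, by omega, by omega⟩

/-- spacer that is the middle of an expected `B (n+1)` -/
def TT (b a : ℕ) (x : ℤ → ℕ) (n : ℕ) (s : ℤ) : Prop := Pat b a x n s ∧ ¬ Pat b a x (n + 1) s

theorem tr_TT {b a : ℕ} (g : Good b a) {x : ℤ → ℕ} {W : ℕ} {P : ℤ}
    (h : ∀ z : ℤ, -(W : ℤ) ≤ z → z ≤ W → x z = yy b a (P + z)) (n : ℕ) (s : ℤ)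
    (h1 : -(W : ℤ) ≤ s - hseq b (n + 1)) (h2 : s + 1 + hseq b (n + 1) ≤ W) :
    TT b a x n s ↔ EZ b a (n + 1) (P + s - off b a n) := by
  obtain ⟨A, A', k1, k2, k3, k4, k5, k6⟩ := g.num n
  have hh := hseq_succ' g n k3
  have ho : off b a n = A * hseq b n := by rw [off, k1]
  have hpos := hseq_pos b n
  have p1 : 1 * hseq b n ≤ A * hseq b n := Nat.mul_le_mul_right _ (by omega)
  have p2 : 1 * hseq b n ≤ A' * hseq b n := Nat.mul_le_mul_right _ (by omega)
  generalize A * hseq b n = o at *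
  generalize A' * hseq b n = o' at *
  rw [TT, tr_pat g h n s (by omega) (by omega), tr_pat g h (n + 1) s (by omega) (by omega)]
  constructor
  · rintro ⟨h3, h4⟩
    rcases h3.cases g with h5 | h5
    · exact absurd h5 h4
    · exact h5
  · intro h3
    refine ⟨by simpa using h3.mid g, fun h4 => h3.not_SZ g h4 (by omega) (by omega)⟩

theorem posn_lt {b a : ℕ} (n : ℕ) (i : ℕ) (hi : i < b ^ (n + 1)) :
    posn b a n i + hseq b n ≤ hseq b (n + 1) := by
  have := Nat.mul_le_mul_right (hseq b n) (Nat.succ_le_of_lt hi)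
  rw [Nat.succ_eq_add_one, add_mul] at this
  simp only [hseq, posn]
  split_ifs <;> omega

theorem off_lt {b a : ℕ} (g : Good b a) (n : ℕ) : off b a n + 1 < hseq b (n + 1) := by
  obtain ⟨A, A', k1, k2, k3, k4, k5, k6⟩ := g.num n
  have hh := hseq_succ' g n k3
  have ho : off b a n = A * hseq b n := by rw [off, k1]
  have hpos := hseq_pos b n
  have p2 : 1 * hseq b n ≤ A' * hseq b n := Nat.mul_le_mul_right _ (by omega)
  omega

theorem X3a {b a : ℕ} (g : Good b a) {x : ℤ → ℕ} (hx : InX b a x) (n i : ℕ) (hi : i < b ^ (n + 1))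
    (h : Pat b a x (n + 1) (-(1 + i * hseq b (n + 1) + off b a n : ℕ))) : TT b a x n 0 := by
  obtain ⟨P, hP, tr⟩ := transfer g hx (i * hseq b (n + 1) + 3 * hseq b (n + 1) + off b a n + 3)
  rw [tr_pat g tr _ _ (by push_cast; omega) (by push_cast; omega)] at h
  rw [tr_TT g tr _ _ (by push_cast; omega) (by push_cast; omega)]
  convert h.run g i hi using 1
  push_cast; ring

theorem X3b {b a : ℕ} (g : Good b a) {x : ℤ → ℕ} (hx : InX b a x) (n i i' : ℕ) 
    (hi : i < b ^ (n + 1)) (hii : i' < i)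
    (h : Pat b a x (n + 1) (-(1 + i * hseq b (n + 1) + off b a n : ℕ)))
    (h' : Pat b a x (n + 1) (-(1 + i' * hseq b (n + 1) + off b a n : ℕ))) : False := by
  have q1 := Nat.mul_lt_mul_of_pos_right hii (hseq_pos b (n + 1))
  have q2 := Nat.mul_lt_mul_of_pos_right hi (hseq_pos b (n + 1))
  obtain ⟨P, hP, tr⟩ := transfer g hx (i * hseq b (n + 1) + 3 * hseq b (n + 1) + off b a n + 3)
  rw [tr_pat g tr _ _ (by push_cast; omega) (by push_cast; omega)] at h
  rw [tr_pat g tr _ _ (by push_cast; omega) (by push_cast; omega)] at h'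
  have := h.sep g h' (by push_cast; omega)
  have q3 := Nat.zero_le (i' * hseq b (n + 1))
  zify at q1 q2 q3
  push_cast at this
  omega

theorem X4a {b a : ℕ} (g : Good b a) {x : ℤ → ℕ} (hx : InX b a x) (n i : ℕ) (hi : i < b ^ (n + 1))
    (h : TT b a x n (off b a n - posn b a n i)) : BlockEq x 0 (Bword b a n) := by
  have := posn_lt (a := a) n i hi
  have := off_lt g n
  obtain ⟨P, hP, tr⟩ := transfer g hx (3 * hseq b (n + 1) + 3)
  rw [tr_TT g tr _ _ (by push_cast; omega) (by push_cast; omega)] at h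
  rw [tr_block g tr _ _ (by omega) (by push_cast; omega)]
  convert yy_EZ g (h.sub g i hi) using 1
  ring

theorem X4b {b a : ℕ} (g : Good b a) {x : ℤ → ℕ} (hx : InX b a x) (n i i' : ℕ) 
    (hi : i < b ^ (n + 1)) (hii : i' < i) (h : TT b a x n (off b a n - posn b a n i)) 
    (h' : TT b a x n (off b a n - posn b a n i')) : False := by
  have := posn_lt (a := a) n i hi
  have := posn_lt (b := b) (a := a) n i' (by omega)
  have := off_lt g n
  obtain ⟨P, hP, tr⟩ := transfer g hx (3 * hseq b (n + 1) + 3)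
  rw [tr_TT g tr _ _ (by push_cast; omega) (by push_cast; omega)] at h h'
  have q1 := Nat.mul_lt_mul_of_pos_right hii (hseq_pos b n)
  have : posn b a n i' < posn b a n i := by
    simp only [posn]; split_ifs <;> omega
  have := h.sep g h' (by omega)
  have := hseq_pos b n
  omega

theorem X5b {b a : ℕ} (g : Good b a) {x : ℤ → ℕ} (hx : InX b a x) (n i : ℕ) 
    (hi : i < b ^ (n + 1 + 1)) (h : TT b a x (n + 1) (off b a (n + 1) - posn b a (n + 1) i))
    (h' : Pat b a x (n + 1) (off b a n)) : False := by
  have := posn_lt (a := a) (n + 1) i hi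
  have := off_lt g n
  have := off_lt g (n + 1)
  obtain ⟨P, hP, tr⟩ := transfer g hx (3 * hseq b (n + 1 + 1) + 3)
  rw [tr_TT g tr _ _ (by push_cast; omega) (by push_cast; omega)] at h
  rw [tr_pat g tr _ _ (by push_cast; omega) (by push_cast; omega)] at h'
  exact (h.sub g i hi).not_SZ g h' (by omega) (by omega)

theorem X5a {b a : ℕ} (g : Good b a) (h2 : b = 2) {x : ℤ → ℕ} (n : ℕ) 
    (h : Pat b a x (n + 1) (off b a n)) : BlockEq x 0 (Bword b a (n + 1)) := by
  obtain ⟨A, A', k1, k2, k3, k4, k5, k6⟩ := g.num n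
  have ha : a = 1 := by have := g.ha; have := g.hab; omega
  have hAA : A = A' := by rw [← k1, ← k2, h2, ha]
  subst hAA
  have hh := hseq_succ' g n k3
  have ho : off b a n = A * hseq b n := by rw [off, k1]
  obtain ⟨j1, j2, j3⟩ := h
  rw [BlockEq_succ g] at j1 j3 ⊢
  refine ⟨?_, by simpa using j2, ?_⟩
  · intro i hi
    have := j1.2.2 i (by omega)
    convert this using 1
    rw [hh, ho]; push_cast; ring
  · intro i hi
    have := j3.1 i (by omega)
    convert this using 1
    ring

theorem X6 {b a : ℕ} (g : Good b a) {x : ℤ → ℕ} (hx : InX b a x) (n : ℕ) :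
    ∃ z : ℕ, z < 3 * hseq b (n + 1) ∧ Pat b a x n z := by
  have hoff := off_lt g n
  have hh : hseq b n ≤ hseq b (n + 1) := by
    rw [hseq]
    have := Nat.mul_le_mul_right (hseq b n) (g.two_le_pow n)
    omega
  obtain ⟨P, hP, tr⟩ := transfer g hx (5 * hseq b (n + 1) + 3)
  have hex : ∃ j, P ≤ ee b a (n + 1) j :=
    ⟨P.toNat, by have := (ee_mono g (n + 1)).le_apply (x := P.toNat); omega⟩
  classical
  obtain ⟨j, hj, hmin⟩ : ∃ j, P ≤ ee b a (n + 1) j ∧ ∀ i, i < j → ¬ P ≤ ee b a (n + 1) i :=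
    ⟨Nat.find hex, Nat.find_spec hex, fun i hi => Nat.find_min hex hi⟩
  have hle : (ee b a (n + 1) j : ℤ) ≤ P + hseq b (n + 1) := by
    rcases j with _ | j
    · rw [ee_zero]; push_cast; omega
    · have := hmin j (by omega)
      rcases ee_step g (n + 1) j with h3 | ⟨h3, -⟩ <;> omega
  obtain ⟨c, hc⟩ : ∃ c : ℕ, (ee b a (n + 1) j : ℤ) = P + c :=
    ⟨(ee b a (n + 1) j - P).toNat, by omega⟩
  refine ⟨c + off b a n, by omega, ?_⟩
  rw [tr_pat g tr _ _ (by push_cast; omega) (by push_cast; omega)]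
  have : EZ b a (n + 1) (P + c) := ⟨j, hc.symm⟩
  convert this.mid g using 1
  push_cast; ring
theorem iter_shift (k : ℕ) (x : ℤ → ℕ) (m : ℤ) : shiftMap^[k] x m = x (m + k) := by
  induction k generalizing m with
  | zero => simp
  | succ k ih =>
    rw [Function.iterate_succ_apply', shiftMap, ih]
    congr 1; push_cast; ring

theorem shift_const {μ : Measure (ℤ → ℕ)} (hinv : MeasurePreserving shiftMap μ μ)
    (S : ℤ → Set (ℤ → ℕ)) (hm : ∀ m, MeasurableSet (S m)) (hS : ∀ m, shiftMap ⁻¹' S m = S (m + 1))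
    (m : ℤ) : μ.real (S m) = μ.real (S 0) := by
  have h : ∀ m, μ.real (S (m + 1)) = μ.real (S m) := fun m => by
    rw [← hS, measureReal_def, hinv.measure_preimage (hm m).nullMeasurableSet, measureReal_def]
  induction m using Int.induction_on with
  | zero => rfl
  | succ i ih => rw [h, ih]
  | pred i ih => rw [← ih, ← h (-(i : ℤ) - 1)]; simp

theorem meas_block (w : List ℕ) (m : ℤ) : MeasurableSet {x : ℤ → ℕ | BlockEq x m w} := by
  have : {x : ℤ → ℕ | BlockEq x m w} =
      ⋂ i : ℕ, ⋂ _ : i < w.length, (fun x : ℤ → ℕ => x (m + i)) ⁻¹' {w.getD i 0} := by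
    ext x; simp [BlockEq]
  rw [this]
  exact MeasurableSet.iInter fun i => MeasurableSet.iInter fun _ =>
    (measurable_pi_apply _) (measurableSet_singleton _)

theorem block_shift (w : List ℕ) (m : ℤ) :
    shiftMap ⁻¹' {x : ℤ → ℕ | BlockEq x m w} = {x : ℤ → ℕ | BlockEq x (m + 1) w} := by
  ext x
  simp only [Set.mem_preimage, Set.mem_ofPred_eq, BlockEq, shiftMap]
  simp only [add_right_comm]

theorem meas_pat {b a : ℕ} (n : ℕ) (m : ℤ) : MeasurableSet {x : ℤ → ℕ | Pat b a x n m} :=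
  (meas_block _ _).inter (((measurable_pi_apply m) (measurableSet_singleton 1)).inter
    (meas_block _ _))

theorem pat_shift {b a : ℕ} (n : ℕ) (m : ℤ) :
    shiftMap ⁻¹' {x : ℤ → ℕ | Pat b a x n m} = {x : ℤ → ℕ | Pat b a x n (m + 1)} := by
  ext x
  simp only [Set.mem_preimage, Set.mem_ofPred_eq, Pat, BlockEq, shiftMap]
  simp only [add_right_comm, sub_add_eq_add_sub]

theorem meas_TT {b a : ℕ} (n : ℕ) (m : ℤ) : MeasurableSet {x : ℤ → ℕ | TT b a x n m} :=
  (meas_pat _ _).diff (meas_pat _ _)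

theorem TT_shift {b a : ℕ} (n : ℕ) (m : ℤ) :
    shiftMap ⁻¹' {x : ℤ → ℕ | TT b a x n m} = {x : ℤ → ℕ | TT b a x n (m + 1)} := by
  have h1 := pat_shift (b := b) (a := a) n m
  have h2 := pat_shift (b := b) (a := a) (n + 1) m
  ext x
  have h3 := Set.ext_iff.1 h1 x
  have h4 := Set.ext_iff.1 h2 x
  exact and_congr h3 (not_congr h4)

theorem real_mono_ae {μ : Measure (ℤ → ℕ)} [IsProbabilityMeasure μ] {A B : Set (ℤ → ℕ)}
    (h : ∀ᵐ x ∂μ, x ∈ A → x ∈ B) : μ.real A ≤ μ.real B :=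
  ENNReal.toReal_mono (measure_ne_top _ _) (measure_mono_ae h)

theorem sum_le {ι : Type} {b a : ℕ} {μ : Measure (ℤ → ℕ)} [IsProbabilityMeasure μ]
    (hae : ∀ᵐ x ∂μ, InX b a x) (I : Finset ι) (A : ι → Set (ℤ → ℕ))
    (hm : ∀ i, MeasurableSet (A i)) (C : Set (ℤ → ℕ))
    (hd : ∀ x, InX b a x → ∀ i ∈ I, ∀ j ∈ I, x ∈ A i → x ∈ A j → i = j)
    (hs : ∀ x, InX b a x → ∀ i ∈ I, x ∈ A i → x ∈ C) :
    ∑ i ∈ I, μ.real (A i) ≤ μ.real C := by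
  have h1 : μ (⋃ i ∈ I, A i) = ∑ i ∈ I, μ (A i) := by
    apply measure_biUnion_finset₀
    · intro i hi j hj hij
      have : ∀ᵐ x ∂μ, ¬ x ∈ A i ∩ A j := by
        filter_upwards [hae] with x hx hx'
        exact hij (hd x hx i hi j hj hx'.1 hx'.2)
      rw [ae_iff] at this
      simpa [Function.onFun, AEDisjoint] using this
    · exact fun i _ => (hm i).nullMeasurableSet
  have h2 : μ.real (⋃ i ∈ I, A i) = ∑ i ∈ I, μ.real (A i) := by
    simp only [measureReal_def]
    rw [h1, ENNReal.toReal_sum fun i _ => measure_ne_top _ _]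
  rw [← h2]
  apply real_mono_ae
  filter_upwards [hae] with x hx hx'
  simp only [Set.mem_iUnion] at hx'
  obtain ⟨i, hi, hxi⟩ := hx'
  exact hs x hx i hi hxi

/-- for any invariant Borel probability measure `μ` on `X` and `N ≥ 2`,
`μ (σ^{h N} (C N) ∆ C N) < (1 / b^(N-1)) μ (C N)`. -/
theorem measure_symmDiff_Cset (b a : ℕ) (hb : 2 ≤ b) (ha1 : 1 ≤ a) (ha2 : a ≤ b - 1)
    (μ : Measure (ℤ → ℕ)) (hprob : IsProbabilityMeasure μ)
    (hsupp : μ {y | InX b a y}ᶜ = 0) (hinv : MeasurePreserving shiftMap μ μ)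
    (N : ℕ) (hN : 2 ≤ N) :
    μ (symmDiff (shiftMap^[hseq b N] '' Cset b a N) (Cset b a N)) <
      (1 / (b : ℝ≥0∞) ^ (N - 1)) * μ (Cset b a N) := by
  have g : Good b a := ⟨hb, ha1, by omega⟩
  obtain ⟨n, rfl⟩ : ∃ n, N = n + 1 := ⟨N - 1, by omega⟩
  have hae : ∀ᵐ x ∂μ, InX b a x := by
    rw [ae_iff]; exact hsupp
  set C : ℤ → Set (ℤ → ℕ) := fun m => {x | BlockEq x m (Bword b a (n + 1))} with hC
  set s := μ.real {x | Pat b a x (n + 1) 0} with hs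
  set s' := μ.real {x | Pat b a x (n + 1 + 1) 0} with hs'
  set t := μ.real {x | TT b a x (n + 1) 0} with ht
  have iC : ∀ m, μ.real (C m) = μ.real (C 0) :=
    shift_const hinv C (fun m => meas_block _ _) (fun m => block_shift _ _)
  have iS : ∀ m, μ.real {x | Pat b a x (n + 1) m} = s :=
    shift_const hinv (fun m => {x | Pat b a x (n + 1) m}) (fun m => meas_pat _ _) (fun m => pat_shift _ _)
  have iS' : ∀ m, μ.real {x | Pat b a x (n + 1 + 1) m} = s' :=
    shift_const hinv (fun m => {x | Pat b a x (n + 1 + 1) m}) (fun m => meas_pat _ _)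
      (fun m => pat_shift _ _)
  have iT : ∀ m, μ.real {x | TT b a x (n + 1) m} = t :=
    shift_const hinv (fun m => {x | TT b a x (n + 1) m}) (fun m => meas_TT _ _)
      (fun m => TT_shift _ _)
  -- the sum of s' and t
  have e1 : s = t + s' := by
    have : {x | TT b a x (n + 1) 0} = {x | Pat b a x (n + 1) 0} \ {x | Pat b a x (n + 1 + 1) 0} := rfl
    rw [ht, this, measureReal_sdiff (show {x | Pat b a x (n + 1 + 1) 0} ⊆ {x | Pat b a x (n + 1) 0} from
      fun x hx => Pat.down g hx) (meas_pat _ _)]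
    ring
  have e2 : (b : ℝ) ^ (n + 1 + 1) * s' ≤ t := by
    have := sum_le hae (Finset.range (b ^ (n + 1 + 1)))
      (fun i => {x | Pat b a x (n + 1 + 1) (-(1 + i * hseq b (n + 1 + 1) + off b a (n + 1) : ℕ))})
      (fun i => meas_pat _ _) {x | TT b a x (n + 1) 0} ?_ ?_
    · simp only [iS'] at this
      simpa using this
    · intro x hx i hi j hj h h'
      rcases lt_trichotomy i j with hl | hl | hl
      · exact (X3b g hx _ _ _ (Finset.mem_range.1 hj) hl h' h).elim
      · exact hl
      · exact (X3b g hx _ _ _ (Finset.mem_range.1 hi) hl h h').elim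
    · intro x hx i hi h
      exact X3a g hx _ i (Finset.mem_range.1 hi) h
  have hdis : ∀ x, InX b a x → ∀ i < b ^ (n + 1 + 1), ∀ j < b ^ (n + 1 + 1),
      TT b a x (n + 1) (off b a (n + 1) - posn b a (n + 1) i) →
      TT b a x (n + 1) (off b a (n + 1) - posn b a (n + 1) j) → i = j := by
    intro x hx i hi j hj h h'
    rcases lt_trichotomy i j with hl | hl | hl
    · exact (X4b g hx _ _ _ hj hl h' h).elim
    · exact hl
    · exact (X4b g hx _ _ _ hi hl h h').elim
  have e3 : (b : ℝ) ^ (n + 1 + 1) * t ≤ μ.real (C 0) := by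
    have := sum_le hae (Finset.range (b ^ (n + 1 + 1)))
      (fun i => {x | TT b a x (n + 1) (off b a (n + 1) - posn b a (n + 1) i)})
      (fun i => meas_TT _ _) (C 0) ?_ ?_
    · simp only [iT] at this
      simpa using this
    · intro x hx i hi j hj h h'
      exact hdis x hx i (Finset.mem_range.1 hi) j (Finset.mem_range.1 hj) h h'
    · intro x hx i hi h
      exact X4a g hx _ i (Finset.mem_range.1 hi) h
  have e4 : b = 2 → (b : ℝ) ^ (n + 1 + 1) * t + s ≤ μ.real (C 0) := by
    intro hb2
    have := sum_le hae (Finset.univ : Finset (Option (Fin (b ^ (n + 1 + 1)))))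
      (fun i => i.elim {x | Pat b a x (n + 1) (off b a n)} 
        fun i => {x | TT b a x (n + 1) (off b a (n + 1) - posn b a (n + 1) i)})
      ?_ (C 0) ?_ ?_
    · rw [Fintype.sum_option] at this
      simp only [Option.elim, iT, iS] at this
      simp at this
      linarith
    · rintro (_ | i)
      · exact meas_pat _ _
      · exact meas_TT _ _
    · rintro x hx (_ | i) - (_ | j) - h h'
      · rfl
      · exact (X5b g hx _ _ j.2 h' h).elim
      · exact (X5b g hx _ _ i.2 h h').elim
      · exact congrArg _ (Fin.ext (hdis x hx i i.2 j j.2 h h'))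
    · rintro x hx (_ | i) - h
      · exact X5a g hb2 n h
      · exact X4a g hx _ i i.2 h
  have e5 : 0 < s := by
    by_contra hneg
    have hs0 : s = 0 := le_antisymm (not_lt.1 hneg) measureReal_nonneg
    have hnull : ∀ᵐ x ∂μ, ∀ z : ℕ, ¬ Pat b a x (n + 1) z := by
      rw [ae_all_iff]
      intro z
      have h1 := iS z
      rw [hs0, measureReal_eq_zero_iff] at h1
      rw [ae_iff]; simpa using h1
    have : ∀ᵐ x ∂μ, False := by
      filter_upwards [hae, hnull] with x hx hx'
      obtain ⟨z, -, hz⟩ := X6 g hx (n + 1)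
      exact hx' z hz
    simp at this
    exact IsProbabilityMeasure.ne_zero μ this
  -- bad points
  have e6 : μ.real (C 0 \ C (-(hseq b (n + 1) : ℤ))) ≤ 2 * s := by
    have : μ.real (C 0 \ C (-(hseq b (n + 1) : ℤ))) ≤
        μ.real ({x | Pat b a x (n + 1) (-1)} ∪ {x | Pat b a x (n + 1) (off b a n)}) := by
      apply real_mono_ae
      filter_upwards [hae] with x hx hx'
      rcases X1 g hx n hx'.1 with h | h | h
      · exact (hx'.2 h).elim
      · exact Or.inl h
      · exact Or.inr h
    have h2 := measureReal_union_le (μ := μ) {x | Pat b a x (n + 1) (-1)} {x | Pat b a x (n + 1) (off b a n)}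
    rw [iS, iS] at h2
    linarith
  have e7 : μ.real (C (-(hseq b (n + 1) : ℤ)) \ C 0) ≤ 2 * s := by
    have h1 := measureReal_inter_add_sdiff (μ := μ) (s := C 0) (t := C (-(hseq b (n + 1) : ℤ))) (meas_block _ _)
    have h2 := measureReal_inter_add_sdiff (μ := μ) (s := C (-(hseq b (n + 1) : ℤ))) (t := C 0) (meas_block _ _)
    rw [Set.inter_comm, iC] at h2
    linarith
  have e8 : μ.real (symmDiff (shiftMap^[hseq b (n + 1)] '' Cset b a (n + 1)) (Cset b a (n + 1))) ≤ 4 * s := by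
    have : μ.real (symmDiff (shiftMap^[hseq b (n + 1)] '' Cset b a (n + 1)) (Cset b a (n + 1))) ≤
        μ.real ((C (-(hseq b (n + 1) : ℤ)) \ C 0) ∪ (C 0 \ C (-(hseq b (n + 1) : ℤ)))) := by
      apply real_mono_ae
      filter_upwards [hae] with x hx hx'
      rcases hx' with ⟨⟨z, hz, rfl⟩, h⟩ | ⟨h, h'⟩
      · left
        refine ⟨?_, fun hc => h ⟨hx, hc⟩⟩
        intro i hi
        rw [iter_shift, ← hz.2 i hi]
        congr 1; ring
      · right
        refine ⟨h.2, fun hc => h' ⟨fun m => x (m - hseq b (n + 1)), ⟨?_, ?_⟩, ?_⟩⟩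
        · intro m l
          obtain ⟨k, p, hkp⟩ := hx (m - hseq b (n + 1)) l
          refine ⟨k, p, ?_⟩
          convert hkp using 5
          ring
        · intro i hi
          rw [← hc i hi]
          congr 1; ring
        · funext m
          rw [iter_shift]; simp
    have h2 := measureReal_union_le (μ := μ) (C (-(hseq b (n + 1) : ℤ)) \ C 0) (C 0 \ C (-(hseq b (n + 1) : ℤ)))
    linarith
  have e9 : μ.real (C 0) ≤ μ.real (Cset b a (n + 1)) := by
    apply real_mono_ae
    filter_upwards [hae] with x hx hx'
    exact ⟨hx, hx'⟩
  have hs'0 : 0 ≤ s' := measureReal_nonneg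
  have fin : 4 * s * (b : ℝ) ^ n < μ.real (C 0) := by
    have hb1 : (1 : ℝ) ≤ (b : ℝ) ^ n := one_le_pow₀ (by exact_mod_cast (by omega : 1 ≤ b))
    have hpw : (b : ℝ) ^ (n + 1 + 1) = (b : ℝ) ^ n * (b : ℝ) ^ 2 := by ring
    rw [hpw] at e2 e3 e4
    by_cases hb2 : b = 2
    · have h4 := e4 hb2
      have hbr : (b : ℝ) = 2 := by exact_mod_cast hb2
      rw [hbr] at e2 h4 ⊢
      generalize (2 : ℝ) ^ n = D at *
      rw [e1] at h4 e5 ⊢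
      by_cases hz : s' = 0
      · rw [hz] at h4 e5 ⊢
        nlinarith
      · have : 0 < s' := lt_of_le_of_ne hs'0 (Ne.symm hz)
        nlinarith
    · have hb3 : (3 : ℝ) ≤ b := by exact_mod_cast (by omega : 3 ≤ b)
      have hsq : (9 : ℝ) ≤ (b : ℝ) ^ 2 := by nlinarith
      generalize (b : ℝ) ^ 2 = B at *
      generalize (b : ℝ) ^ n = D at *
      have h9 : 9 * (D * s') ≤ B * (D * s') := mul_le_mul_of_nonneg_right hsq (by positivity)
      have h1 : s' ≤ D * s' := le_mul_of_one_le_left hs'0 hb1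
      have ht0 : 0 < t := by nlinarith
      have h10 : 9 * (D * t) ≤ B * (D * t) := mul_le_mul_of_nonneg_right hsq (by positivity)
      have h11 : t ≤ D * t := le_mul_of_one_le_left ht0.le hb1
      rw [e1]
      nlinarith
  have hbp : (0 : ℝ) < (b : ℝ) ^ n := pow_pos (by exact_mod_cast (by omega : 0 < b)) _
  have fin2 : μ.real (symmDiff (shiftMap^[hseq b (n + 1)] '' Cset b a (n + 1)) (Cset b a (n + 1))) <
      (1 / (b : ℝ) ^ n) * μ.real (Cset b a (n + 1)) := by
    rw [one_div, inv_mul_eq_div, lt_div_iff₀ hbp]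
    nlinarith
  rw [Nat.add_sub_cancel]
  have hne : (1 / (b : ℝ≥0∞) ^ n) * μ (Cset b a (n + 1)) ≠ ∞ := by
    refine ENNReal.mul_ne_top ?_ (measure_ne_top _ _)
    rw [one_div]
    refine ENNReal.inv_ne_top.2 (pow_ne_zero _ ?_)
    exact_mod_cast (by omega : b ≠ 0)
  rw [← ENNReal.toReal_lt_toReal (measure_ne_top _ _) hne, ENNReal.toReal_mul]
  simpa [Measure.real] using fin2
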